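/- Let R be a commutative ring, M an R-module, and V₁ ⊆ V₂ submodules of M that are both direct summands of M. Then the map W ↦ (image of W under the quotient map M → M/V₁) is an inclusion-preserving bijection from the set of submodules W of M with V₁ ⊆ W ⊆ V₂ that are direct summands of M, onto the set of submodules U of M/V₁ contained in the image of V₂ that are direct summands of M/V₁; its inverse sends U to its preimage in M under the quotient map. -/

import Mathlib

/-- A submodule `N` of a module `P` is a direct summand. -/
def IsSummand {R P : Type*} [CommRing R] [AddCommGroup P] [Module R P]
    (N : Submodule R P) : Prop :=
  ∃ N' : Submodule R P, N ⊓ N' = ⊥ ∧ N ⊔ N' = ⊤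

namespace IsSummand

variable {R M : Type*} [CommRing R] [AddCommGroup M] [Module R M] {V W : Submodule R M}

/-- The image in `M ⧸ V` of a direct summand containing `V` is a direct summand. -/
theorem map_mkQ (hVW : V ≤ W) (hW : IsSummand W) : IsSummand (W.map V.mkQ) := by
  obtain ⟨C, hinf, hsup⟩ := hW
  refine ⟨C.map V.mkQ, ?_, ?_⟩
  · rw [eq_bot_iff]
    rintro _ ⟨⟨w, hw, rfl⟩, c, hc, hcw⟩
    have hsub : c - w ∈ V := (Submodule.Quotient.eq V).mp hcw
    have hcW : c ∈ W := by simpa using W.add_mem (hVW hsub) hw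
    have hc0 : c ∈ W ⊓ C := ⟨hcW, hc⟩
    rw [hinf, Submodule.mem_bot] at hc0
    rw [← hcw, hc0, map_zero]
    exact Submodule.zero_mem _
  · rw [← Submodule.map_sup, hsup, Submodule.map_top, Submodule.range_mkQ]

/-- The preimage in `M` of a direct summand of `M ⧸ V` is a direct summand if `V` is. -/
theorem comap_mkQ (hV : IsSummand V) {U : Submodule R (M ⧸ V)} (hU : IsSummand U) :
    IsSummand (U.comap V.mkQ) := by
  obtain ⟨C, hVinf, hVsup⟩ := hV
  obtain ⟨D, hUinf, hUsup⟩ := hU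
  have hsup : V ⊔ C ⊓ D.comap V.mkQ = D.comap V.mkQ := by
    rw [← sup_inf_assoc_of_le C (Submodule.le_comap_mkQ V D), hVsup, top_inf_eq]
  refine ⟨C ⊓ D.comap V.mkQ, ?_, ?_⟩
  · rw [inf_left_comm, ← Submodule.comap_inf, hUinf, Submodule.comap_bot, Submodule.ker_mkQ,
      inf_comm, hVinf]
  · rw [← sup_eq_left.mpr (Submodule.le_comap_mkQ V U), sup_assoc, hsup, eq_top_iff]
    intro x _
    obtain ⟨u, hu, d, hd, hx⟩ := Submodule.mem_sup.mp (hUsup ▸ Submodule.mem_top : V.mkQ x ∈ U ⊔ D)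
    obtain ⟨y, rfl⟩ := V.mkQ_surjective u
    refine Submodule.mem_sup.mpr ⟨y, hu, x - y, ?_, add_sub_cancel y x⟩
    rwa [Submodule.mem_comap, map_sub, ← hx, add_sub_cancel_left]

end IsSummand

/-- Let `V₁ ⊆ V₂` be submodules of `M` that are direct summands of `M`. Then
`W ↦ W/V₁` (the image of `W` under `M → M/V₁`) is an inclusion-preserving bijection from the
set of direct summands `W` of `M` with `V₁ ⊆ W ⊆ V₂` onto the set of direct summands of
`M/V₁` contained in the image of `V₂`, with inverse `U ↦` (preimage of `U` in `M`). -/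
theorem summand_quotient_bijection {R M : Type*} [CommRing R] [AddCommGroup M] [Module R M]
    (V₁ V₂ : Submodule R M) (h₁₂ : V₁ ≤ V₂) (h₁ : IsSummand V₁) (h₂ : IsSummand V₂) :
    (∀ W : Submodule R M, V₁ ≤ W → W ≤ V₂ → IsSummand W →
        W.map V₁.mkQ ≤ V₂.map V₁.mkQ ∧ IsSummand (W.map V₁.mkQ)) ∧
    (∀ W W' : Submodule R M, V₁ ≤ W → W ≤ V₂ → IsSummand W →
        V₁ ≤ W' → W' ≤ V₂ → IsSummand W' →
        (W ≤ W' ↔ W.map V₁.mkQ ≤ W'.map V₁.mkQ)) ∧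
    (∀ W : Submodule R M, V₁ ≤ W → W ≤ V₂ → IsSummand W →
        (W.map V₁.mkQ).comap V₁.mkQ = W) ∧
    (∀ U : Submodule R (M ⧸ V₁), U ≤ V₂.map V₁.mkQ → IsSummand U →
        V₁ ≤ U.comap V₁.mkQ ∧ U.comap V₁.mkQ ≤ V₂ ∧ IsSummand (U.comap V₁.mkQ) ∧
        (U.comap V₁.mkQ).map V₁.mkQ = U) := by
  have comap_map {W : Submodule R M} (h : V₁ ≤ W) : (W.map V₁.mkQ).comap V₁.mkQ = W := by
    rw [Submodule.comap_map_mkQ, sup_eq_right.mpr h]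
  refine ⟨fun W hW hW₂ hs => ⟨Submodule.map_mono hW₂, hs.map_mkQ hW⟩, ?_,
    fun W hW _ _ => comap_map hW, fun U hU hs => ⟨Submodule.le_comap_mkQ V₁ U, ?_,
      h₁.comap_mkQ hs, Submodule.map_comap_eq_of_surjective V₁.mkQ_surjective U⟩⟩
  · intro W W' _ _ _ hW' _ _
    rw [Submodule.map_le_iff_le_comap, comap_map hW']
  · exact (Submodule.comap_mono hU).trans_eq (comap_map h₁₂)
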